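/- arXiv:2211.02871 — 2 statements merged into one kernel-verified Lean document; each statement's English description precedes it below -/
import Mathlib

section
/- Let N ≥ 2 and let 𝟙_S be the projector onto the symmetric subspace of N qubits. The partial transpose (𝟙_S)^{T_{{0}}} with respect to qubit 0 is positive semidefinite, and its smallest nonzero eigenvalue equals 1/N (in particular, 1/N is an eigenvalue and every eigenvalue is either 0 or at least 1/N). -/
open scoped ComplexOrder

noncomputable section

/-- Separability of an `N`-qubit matrix across the bipartition `X : Xᶜ`. -/
def SepAcross {N : ℕ} (X : Finset (Fin N))
    (σ : Matrix (Fin N → Fin 2) (Fin N → Fin 2) ℂ) : Prop :=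
  ∃ (K : ℕ)
    (A : Fin K → Matrix ({i // i ∈ X} → Fin 2) ({i // i ∈ X} → Fin 2) ℂ)
    (B : Fin K → Matrix ({i // i ∈ Xᶜ} → Fin 2) ({i // i ∈ Xᶜ} → Fin 2) ℂ),
    (∀ k, (A k).PosSemidef) ∧ (∀ k, (B k).PosSemidef) ∧
    ∀ x y, σ x y =
      ∑ k, A k (fun i => x i.1) (fun i => y i.1) * B k (fun i => x i.1) (fun i => y i.1)

/-- Partial transpose with respect to the qubits in `X`. -/
def pt {N : ℕ} (X : Finset (Fin N))
    (σ : Matrix (Fin N → Fin 2) (Fin N → Fin 2) ℂ) :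
    Matrix (Fin N → Fin 2) (Fin N → Fin 2) ℂ :=
  fun x y => σ (fun i => if i ∈ X then y i else x i) (fun i => if i ∈ X then x i else y i)

/-- The Dicke state `|S_k^N⟩`. -/
def dicke (N k : ℕ) : (Fin N → Fin 2) → ℂ :=
  fun x => if (Finset.univ.filter (fun i => x i = 1)).card = k
    then ((Real.sqrt (N.choose k))⁻¹ : ℝ) else 0

/-- The projector onto the symmetric subspace of `N` qubits. -/
def symProj (N : ℕ) : Matrix (Fin N → Fin 2) (Fin N → Fin 2) ℂ :=
  fun x y => ∑ k ∈ Finset.range (N + 1), dicke N k x * star (dicke N k y)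

/-- Full separability of an `N`-qubit matrix. -/
def FullySep {N : ℕ} (σ : Matrix (Fin N → Fin 2) (Fin N → Fin 2) ℂ) : Prop :=
  ∃ (K : ℕ) (A : Fin K → Fin N → Matrix (Fin 2) (Fin 2) ℂ),
    (∀ k i, (A k i).PosSemidef) ∧
    ∀ x y, σ x y = ∑ k, ∏ i, A k i (x i) (y i)

/-- The second Pauli matrix. -/
def pauliY : Matrix (Fin 2) (Fin 2) ℂ := !![0, -Complex.I; Complex.I, 0]

/-- The `N`-qubit operator acting as `σy` on each qubit in `X` and trivially elsewhere. -/
def pauliYat {N : ℕ} (X : Finset (Fin N)) :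
    Matrix (Fin N → Fin 2) (Fin N → Fin 2) ℂ :=
  fun x y => ∏ i, if i ∈ X then pauliY (x i) (y i) else (if x i = y i then 1 else 0)

/-- `(σy@X) · ρ^{T_X} · (σy@X)`. -/
def tildeAt {N : ℕ} (X : Finset (Fin N))
    (ρ : Matrix (Fin N → Fin 2) (Fin N → Fin 2) ℂ) :
    Matrix (Fin N → Fin 2) (Fin N → Fin 2) ℂ :=
  pauliYat X * pt X ρ * pauliYat X

/-- The Hankel matrix `M_l(q)` with entries `q_{i+j+l} / (N choose (i+j+l))`. -/
def hankel (N l : ℕ) (q : ℕ → ℝ) :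
    Matrix (Fin ((N - l) / 2 + 1)) (Fin ((N - l) / 2 + 1)) ℝ :=
  fun i j => q ((i : ℕ) + j + l) / (N.choose ((i : ℕ) + j + l))

/-- The diagonal symmetric state `Σ_k p_k |S_k^N⟩⟨S_k^N|`. -/
def rhoDS (N : ℕ) (p : ℕ → ℝ) : Matrix (Fin N → Fin 2) (Fin N → Fin 2) ℂ :=
  fun x y => ∑ k ∈ Finset.range (N + 1), (p k : ℂ) * dicke N k x * star (dicke N k y)

/-!
Fix a qubit `a`, write `Q = 𝟙_a ⊗ 𝟙_S` for the symmetrizer of the other qubits and `F_{ai}` for the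
swap of the qubits `a` and `i`. Splitting the permutations of the `N` qubits into cosets of the
stabilizer of `a` gives `𝟙_S = N⁻¹ ∑ i, F_{ai} Q`, an identity of matrix entries that amounts to
counting the `i` with `x i = y a`. Partial transposition at `a` commutes with right multiplication
by `Q`, fixes `F_{aa} = 1` and turns every other `F_{ai}` into an unnormalized maximally entangled
projector, so that `(𝟙_S)^{T_a} = N⁻¹ (1 + K) Q` with `K ≥ 0`. The left-hand side is Hermitian,
hence `Q` fixes each unit eigenvector `v` with nonzero eigenvalue, which therefore equals
`N⁻¹ (1 + ⟨v, K v⟩) ≥ N⁻¹`. The product vector with a single `1`, at `a`, attains the bound.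
-/

section Spectral

open Matrix

variable {ι 𝕜 : Type*} [RCLike 𝕜] [Fintype ι] [DecidableEq ι]

lemma mem_range_eigenvalues_of_mulVec_eq_smul {M : Matrix ι ι 𝕜} (hM : M.IsHermitian)
    {v : ι → 𝕜} (hv : v ≠ 0) {c : ℝ} (h : M *ᵥ v = (c : 𝕜) • v) :
    c ∈ Set.range hM.eigenvalues := by
  rw [← hM.spectrum_real_eq_range_eigenvalues, ← spectrum.algebraMap_mem_iff 𝕜,
    ← Matrix.spectrum_toLin']
  refine (Module.End.hasEigenvalue_of_hasEigenvector (x := v) ⟨?_, hv⟩).mem_spectrum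
  simpa [Module.End.mem_eigenspace_iff] using h

lemma eigenvalues_eq_zero_or_le_of_eq_smul_one_add_mul {M K Q : Matrix ι ι 𝕜}
    (hM : M.IsHermitian) (hK : K.PosSemidef) (hQ : IsStarProjection Q) {c : ℝ} (hc : 0 ≤ c)
    (h : M = c • ((1 + K) * Q)) (j : ι) :
    hM.eigenvalues j = 0 ∨ c ≤ hM.eigenvalues j := by
  set v : ι → 𝕜 := (hM.eigenvectorBasis j).ofLp
  set μ := hM.eigenvalues j
  refine or_iff_not_imp_left.2 fun hμ => ?_
  have hv : star v ⬝ᵥ v = 1 := by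
    rw [dotProduct_comm, ← EuclideanSpace.inner_eq_star_dotProduct]
    exact hM.eigenvectorBasis.inner_eq_one j
  have hMv : M *ᵥ v = μ • v := hM.mulVec_eigenvectorBasis j
  have hMQ : M * Q = M := by
    rw [h, smul_mul, Matrix.mul_assoc, hQ.isIdempotentElem.eq]
  have hQM : Q * M = M := by
    have hQH : Qᴴ = Q := hQ.isSelfAdjoint
    simpa only [conjTranspose_mul, hM.eq, hQH] using congrArg conjTranspose hMQ
  have hQv : Q *ᵥ v = v := by
    refine smul_right_injective _ hμ ?_
    change μ • Q *ᵥ v = μ • v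
    rw [← mulVec_smul, ← hMv, mulVec_mulVec, hQM]
  have hμv : μ • v = c • (v + K *ᵥ v) := by
    rw [← hMv, h, smul_mulVec, ← mulVec_mulVec, hQv, add_mulVec, one_mulVec]
  have hμ_eq : μ = c * (1 + RCLike.re (star v ⬝ᵥ K *ᵥ v)) := by
    simpa [dotProduct_smul, dotProduct_add, hv, RCLike.smul_re, mul_add] using
      congrArg (fun w => RCLike.re (star v ⬝ᵥ w)) hμv
  rw [hμ_eq]
  exact le_mul_of_one_le_right hc (le_add_of_nonneg_right (hK.re_dotProduct_nonneg v))

end Spectral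

section QubitOperators

open Matrix

variable {N n : ℕ}

/-- Operators on `N` qubits, as matrices in the computational basis. -/
abbrev QubitOperator (N : ℕ) : Type :=
  Matrix (Fin N → Fin 2) (Fin N → Fin 2) ℂ

lemma isHermitian_pt (X : Finset (Fin N)) {σ : QubitOperator N} (hσ : σ.IsHermitian) :
    (pt X σ).IsHermitian :=
  congrArg (pt X) hσ

lemma pt_one (X : Finset (Fin N)) : pt X 1 = 1 := by
  ext x y
  have h : ((fun i => if i ∈ X then y i else x i) = fun i => if i ∈ X then x i else y i) ↔
      x = y := by
    simp only [funext_iff]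
    refine forall_congr' fun i => ?_
    split_ifs
    · exact eq_comm
    · rfl
  simp only [pt, one_apply, h]

lemma pt_smul {R : Type*} [SMul R ℂ] (X : Finset (Fin N)) (c : R) (σ : QubitOperator N) :
    pt X (c • σ) = c • pt X σ :=
  rfl

lemma pt_sum {α : Type*} (X : Finset (Fin N)) (s : Finset α) (σ : α → QubitOperator N) :
    pt X (∑ i ∈ s, σ i) = ∑ i ∈ s, pt X (σ i) := by
  ext x y
  simp only [pt, Matrix.sum_apply]

lemma pt_singleton_apply (a : Fin N) (σ : QubitOperator N) (x y : Fin N → Fin 2) :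
    pt {a} σ x y = σ (Function.update x a (y a)) (Function.update y a (x a)) := by
  simp only [pt, Finset.mem_singleton]
  congr 1 <;> ext i <;> by_cases h : i = a <;> simp [h]

/-- The operator `𝟙 ⊗ B` acting trivially on qubit `a` and as `B` on the remaining qubits, which
keep their order. -/
def idTensor (a : Fin (n + 1)) (B : QubitOperator n) : QubitOperator (n + 1) :=
  (kroneckerMap (· * ·) (1 : Matrix (Fin 2) (Fin 2) ℂ) B).submatrix
    (Fin.insertNthEquiv (fun _ => Fin 2) a).symm (Fin.insertNthEquiv (fun _ => Fin 2) a).symm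

lemma idTensor_apply (a : Fin (n + 1)) (B : QubitOperator n) (x y : Fin (n + 1) → Fin 2) :
    idTensor a B x y = if x a = y a then B (a.removeNth x) (a.removeNth y) else 0 := by
  simp [idTensor, one_apply, Fin.insertNthEquiv]

lemma isStarProjection_idTensor (a : Fin (n + 1)) {B : QubitOperator n}
    (hB : IsStarProjection B) : IsStarProjection (idTensor a B) where
  isIdempotentElem := by
    rw [IsIdempotentElem, idTensor, submatrix_mul_equiv, ← mul_kronecker_mul, one_mul,
      hB.isIdempotentElem.eq]
  isSelfAdjoint := by
    have hBH : Bᴴ = B := hB.isSelfAdjoint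
    rw [IsSelfAdjoint, star_eq_conjTranspose, idTensor, conjTranspose_submatrix,
      conjTranspose_kronecker, conjTranspose_one, hBH]

lemma pt_mul_idTensor (a : Fin (n + 1)) (A : QubitOperator (n + 1)) (B : QubitOperator n) :
    pt {a} (A * idTensor a B) = pt {a} A * idTensor a B := by
  ext x y
  simp only [pt_singleton_apply, mul_apply, idTensor_apply,
    ← (Fin.insertNthEquiv (fun _ => Fin 2) a).sum_comp, Fintype.sum_prod_type]
  simp [Fin.insertNthEquiv]

/-- The swap operator of the qubits `i` and `j`; it is the identity when `i = j`. -/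
def qubitSwap (i j : Fin N) : QubitOperator N :=
  (1 : QubitOperator N).submatrix (· ∘ Equiv.swap i j) id

lemma qubitSwap_self (i : Fin N) : qubitSwap i i = 1 := by
  rw [qubitSwap, Equiv.swap_self]
  exact submatrix_id_id 1

lemma qubitSwap_mul_apply (i j : Fin N) (A : QubitOperator N) (x y : Fin N → Fin 2) :
    (qubitSwap i j * A) x y = A (x ∘ Equiv.swap i j) y := by
  simp [qubitSwap, mul_apply, one_apply]

lemma pt_qubitSwap_apply {i j : Fin N} (hij : i ≠ j) (x y : Fin N → Fin 2) :
    pt {i} (qubitSwap i j) x y =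
      if x j = x i ∧ y j = y i ∧ ∀ k, k ≠ i → k ≠ j → x k = y k then 1 else 0 := by
  have hswap : Function.update x i (y i) ∘ Equiv.swap i j = Function.update y i (x i) ↔
      x j = x i ∧ y j = y i ∧ ∀ k, k ≠ i → k ≠ j → x k = y k := by
    simp only [funext_iff, Function.comp_apply, Function.update_apply, Equiv.swap_apply_def]
    refine ⟨fun h => ⟨?_, ?_, ?_⟩, ?_⟩
    · simpa [hij.symm] using h i
    · simpa [hij.symm] using (h j).symm
    · grind
    · grind
  simp only [pt_singleton_apply, qubitSwap, submatrix_apply, one_apply, id, hswap]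

lemma posSemidef_pt_qubitSwap {i j : Fin N} (hij : i ≠ j) :
    (pt {i} (qubitSwap i j)).PosSemidef := by
  let agree : (Fin N → Fin 2) → ℂ := fun x => if x j = x i then 1 else 0
  let rest : (Fin N → Fin 2) → ({k // k ≠ i ∧ k ≠ j} → Fin 2) := fun x k => x k
  have hfactor : pt {i} (qubitSwap i j) =
      diagonal agree * (1 : Matrix _ _ ℂ).submatrix rest rest * (diagonal agree)ᴴ := by
    ext x y
    have hrest : rest x = rest y ↔ ∀ k, k ≠ i → k ≠ j → x k = y k := by
      simp [rest, funext_iff]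
    simp only [pt_qubitSwap_apply hij, agree, diagonal_conjTranspose, diagonal_mul, mul_diagonal,
      submatrix_apply, one_apply, hrest, Pi.star_apply]
    split_ifs <;> simp_all
  rw [hfactor]
  exact (PosSemidef.one.submatrix rest).mul_mul_conjTranspose_same _

end QubitOperators

section Weight

open Finset

variable {ι : Type*} [Fintype ι] {n : ℕ}

/-- The Hamming weight of a bit string. It is written as a sum of bits, rather than as the
cardinality in `dicke`, so that big-operator lemmas apply. -/
def weight (x : ι → Fin 2) : ℕ := ∑ i, (x i : ℕ)

lemma card_filter_eq_one (x : ι → Fin 2) : #{i | x i = 1} = weight x := by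
  rw [weight, card_filter]
  refine sum_congr rfl fun i _ => ?_
  generalize x i = s
  decide +revert

lemma card_filter_eq_zero_add_weight (x : ι → Fin 2) :
    #{i | x i = 0} + weight x = Fintype.card ι := by
  have hcompl : ∀ i, x i = 1 ↔ ¬ x i = 0 := fun i => by
    generalize x i = s
    decide +revert
  rw [← card_filter_eq_one, filter_congr fun i _ => hcompl i, card_filter_add_card_filter_not,
    card_univ]

lemma weight_le_card (x : ι → Fin 2) : weight x ≤ Fintype.card ι :=
  (card_filter_eq_one x).symm.trans_le (card_filter_le _ _)

lemma weight_eq_zero {x : ι → Fin 2} : weight x = 0 ↔ x = 0 := by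
  simp [weight, funext_iff]

lemma weight_comp_perm (x : ι → Fin 2) (e : Equiv.Perm ι) : weight (x ∘ e) = weight x :=
  Equiv.sum_comp e fun i => (x i : ℕ)

lemma weight_single [DecidableEq ι] (a : ι) (s : Fin 2) : weight (Pi.single a s) = s := by
  simp [weight, Pi.single_apply, apply_ite]

lemma weight_eq_add_weight_removeNth (a : Fin (n + 1)) (x : Fin (n + 1) → Fin 2) :
    weight x = x a + weight (a.removeNth x) :=
  Fin.sum_univ_succAbove _ a

lemma card_filter_weight_eq [DecidableEq ι] (k : ℕ) :
    #{x : ι → Fin 2 | weight x = k} = (Fintype.card ι).choose k := by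
  rw [← card_univ, ← card_powersetCard]
  refine card_nbij' (fun x => ({i | x i = 1} : Finset ι)) (fun s i => if i ∈ s then 1 else 0)
    ?_ ?_ ?_ ?_
  · intro x hx
    simpa [mem_powersetCard, card_filter_eq_one] using hx
  · intro s hs
    simpa [← card_filter_eq_one, mem_powersetCard] using hs
  · intro x _
    ext i
    simp only [mem_filter_univ]
    generalize x i = s
    decide +revert
  · intro s _
    simp

lemma card_filter_eq_mul_choose (a : Fin (n + 1)) {x y : Fin (n + 1) → Fin 2}
    (h : weight x = weight y) :
    #{i | x i = y a} * (n + 1).choose (weight y) =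
      (n + 1) * n.choose (weight (a.removeNth y)) := by
  have hy := weight_eq_add_weight_removeNth a y
  obtain ha | ha : y a = 0 ∨ y a = 1 := by
    generalize y a = s
    decide +revert
  · have hzeros : #{i | x i = 0} = n + 1 - weight y := by
      have := card_filter_eq_zero_add_weight x
      rw [Fintype.card_fin] at this
      omega
    rw [ha, hzeros, mul_comm, hy, ha, Fin.val_zero, zero_add, ← Nat.choose_mul_succ_eq, mul_comm]
  · rw [ha, card_filter_eq_one, h, hy, ha, Fin.val_one, add_comm 1, mul_comm,
      Nat.add_one_mul_choose_eq]

lemma weight_update_one_eq_iff (a : Fin (n + 1)) (x : Fin (n + 1) → Fin 2) :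
    weight (Function.update x a 1) = x a ↔ x = Pi.single a 1 := by
  have hupdate : weight (Function.update x a 1) = 1 + weight (a.removeNth x) := by
    simp [weight_eq_add_weight_removeNth a]
  rw [hupdate]
  constructor
  · intro h
    have hxa : x a = 1 := by omega
    have hrest : a.removeNth x = 0 := weight_eq_zero.1 (by omega)
    rw [← Fin.insertNth_self_removeNth a x, hxa, hrest, Fin.insertNth_zero_right]
  · rintro rfl
    have h := weight_eq_add_weight_removeNth a (Pi.single a 1)
    rw [weight_single] at h
    simp_all

end Weight

section SymmetricProjector

open Matrix Finset

variable {N n : ℕ}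

lemma symProj_apply (x y : Fin N → Fin 2) :
    symProj N x y = if weight x = weight y then (N.choose (weight x) : ℂ)⁻¹ else 0 := by
  have hterm : ∀ k, dicke N k x * star (dicke N k y) =
      if weight x = k then if weight y = k then (N.choose k : ℂ)⁻¹ else 0 else 0 := fun k => by
    have hsqrt : ((√(N.choose k))⁻¹ * (√(N.choose k))⁻¹ : ℝ) = (N.choose k : ℝ)⁻¹ := by
      rw [← mul_inv, Real.mul_self_sqrt (Nat.cast_nonneg _)]
    simp only [dicke, card_filter_eq_one]
    split_ifs
    · rw [Complex.star_def, Complex.conj_ofReal, ← Complex.ofReal_mul, hsqrt, Complex.ofReal_inv,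
        Complex.ofReal_natCast]
    all_goals simp
  have hmem : weight x ∈ range (N + 1) := by
    simpa [Nat.lt_succ_iff] using weight_le_card x
  simp only [symProj, hterm, sum_ite_eq, hmem, if_true, eq_comm (a := weight y)]

lemma isStarProjection_symProj : IsStarProjection (symProj N) where
  isIdempotentElem := by
    ext x y
    have hcard : #{z : Fin N → Fin 2 | weight x = weight z} = N.choose (weight x) := by
      simpa [eq_comm] using card_filter_weight_eq (ι := Fin N) (weight x)
    have hchoose : (N.choose (weight x) : ℂ) ≠ 0 := by
      exact_mod_cast (Nat.choose_pos (by simpa using weight_le_card x)).ne'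
    have hterm : ∀ z, symProj N x z * symProj N z y =
        if weight x = weight z then (N.choose (weight x) : ℂ)⁻¹ * symProj N x y else 0 :=
      fun z => by
        simp only [symProj_apply]
        split_ifs <;> simp_all
    simp only [mul_apply, hterm]
    rw [← sum_filter, sum_const, hcard, nsmul_eq_mul, mul_inv_cancel_left₀ hchoose]
  isSelfAdjoint := by
    ext x y
    rw [star_apply, symProj_apply, symProj_apply]
    split_ifs <;> simp_all

lemma qubitSwap_mul_idTensor_symProj_apply (a i : Fin (n + 1)) (x y : Fin (n + 1) → Fin 2) :
    (qubitSwap a i * idTensor a (symProj n)) x y =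
      if x i = y a then
        if weight x = weight y then (n.choose (weight (a.removeNth y)) : ℂ)⁻¹ else 0
      else 0 := by
  have hx : weight x = x i + weight (a.removeNth (x ∘ Equiv.swap a i)) := by
    simpa [weight_comp_perm] using weight_eq_add_weight_removeNth a (x ∘ Equiv.swap a i)
  rw [qubitSwap_mul_apply, idTensor_apply, Function.comp_apply, Equiv.swap_apply_left]
  refine ite_congr rfl (fun hi => ?_) fun _ => rfl
  rw [hx, weight_eq_add_weight_removeNth a y, hi, symProj_apply]
  split_ifs <;> simp_all

lemma symProj_succ (a : Fin (n + 1)) :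
    symProj (n + 1) = (n + 1 : ℝ)⁻¹ • ∑ i, qubitSwap a i * idTensor a (symProj n) := by
  have hn : (n + 1 : ℝ) ≠ 0 := by positivity
  rw [eq_inv_smul_iff₀ hn]
  ext x y
  simp only [Matrix.sum_apply, qubitSwap_mul_idTensor_symProj_apply]
  rw [← sum_filter, sum_const, Matrix.smul_apply, symProj_apply]
  split_ifs with h
  · have hcount : (#{i | x i = y a} : ℂ) * (n + 1).choose (weight y) =
        ((n + 1 : ℝ) : ℂ) * n.choose (weight (a.removeNth y)) := by
      exact_mod_cast card_filter_eq_mul_choose a h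
    have hchoose_succ : ((n + 1).choose (weight y) : ℂ) ≠ 0 := by
      exact_mod_cast (Nat.choose_pos (by simpa using weight_le_card y)).ne'
    have hchoose : (n.choose (weight (a.removeNth y)) : ℂ) ≠ 0 := by
      exact_mod_cast (Nat.choose_pos (by simpa using weight_le_card (a.removeNth y))).ne'
    rw [h, nsmul_eq_mul, Complex.real_smul, ← div_eq_mul_inv, ← div_eq_mul_inv,
      div_eq_div_iff hchoose_succ hchoose, hcount]
  · simp only [smul_zero]

lemma pt_symProj_succ (a : Fin (n + 1)) :
    pt {a} (symProj (n + 1)) = (n + 1 : ℝ)⁻¹ •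
      ((1 + ∑ i ∈ univ.erase a, pt {a} (qubitSwap a i)) * idTensor a (symProj n)) := by
  rw [symProj_succ a, pt_smul, pt_sum]
  simp only [pt_mul_idTensor]
  rw [← sum_mul, ← add_sum_erase _ _ (mem_univ a), qubitSwap_self, pt_one]

lemma eigenvalues_pt_symProj_eq_zero_or_le (a : Fin (n + 1))
    (hM : (pt {a} (symProj (n + 1))).IsHermitian) (j : Fin (n + 1) → Fin 2) :
    hM.eigenvalues j = 0 ∨ (n + 1 : ℝ)⁻¹ ≤ hM.eigenvalues j :=
  eigenvalues_eq_zero_or_le_of_eq_smul_one_add_mul hM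
    (posSemidef_sum _ fun _ hi => posSemidef_pt_qubitSwap (ne_of_mem_erase hi).symm)
    (isStarProjection_idTensor a isStarProjection_symProj) (by positivity) (pt_symProj_succ a) j

lemma pt_symProj_mulVec_single (a : Fin (n + 1)) :
    pt {a} (symProj (n + 1)) *ᵥ Pi.single (Pi.single a 1) 1 =
      (n + 1 : ℂ)⁻¹ • Pi.single (Pi.single a 1) 1 := by
  ext x
  have hupdate : Function.update (Pi.single a 1 : Fin (n + 1) → Fin 2) a (x a) =
      Pi.single a (x a) := Function.update_idem ..
  rw [mulVec_single_one, col_apply, pt_singleton_apply, Pi.single_eq_same, hupdate, symProj_apply,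
    weight_single, Pi.smul_apply, Pi.single_apply, smul_eq_mul, mul_ite, mul_one, mul_zero]
  refine ite_congr (propext (weight_update_one_eq_iff a x)) (fun hx => ?_) fun _ => rfl
  rw [(weight_update_one_eq_iff a x).2 hx, hx, Pi.single_eq_same, Fin.val_one, Nat.choose_one_right,
    Nat.cast_succ]

end SymmetricProjector

theorem stmt6_general {N : ℕ} (a : Fin N) :
    ∃ h : (pt {a} (symProj N)).PosSemidef,
      (∃ j, h.1.eigenvalues j = 1 / (N : ℝ)) ∧
      ∀ j, h.1.eigenvalues j = 0 ∨ 1 / (N : ℝ) ≤ h.1.eigenvalues j := by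
  obtain _ | n := N
  · exact a.elim0
  rw [Nat.cast_succ, one_div]
  have hM : (pt {a} (symProj (n + 1))).IsHermitian :=
    isHermitian_pt {a} isStarProjection_symProj.isSelfAdjoint
  have hgap := eigenvalues_pt_symProj_eq_zero_or_le a hM
  have hattained : (n + 1 : ℝ)⁻¹ ∈ Set.range hM.eigenvalues :=
    mem_range_eigenvalues_of_mulVec_eq_smul hM (v := Pi.single (Pi.single a 1) 1) (by simp)
      (by simpa using pt_symProj_mulVec_single a)
  have hnonneg : ∀ j, 0 ≤ hM.eigenvalues j := fun j =>
    (hgap j).elim (fun h => h.ge) (le_trans (by positivity))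
  exact ⟨hM.posSemidef_iff_eigenvalues_nonneg.2 hnonneg, hattained, hgap⟩

/-- The partial transpose of the symmetric projector of `N` qubits is PSD and
its smallest nonzero eigenvalue is `1/N`. -/
theorem stmt6 (N : ℕ) (hN : 2 ≤ N) :
    ∃ h : (pt {⟨0, by omega⟩} (symProj N)).PosSemidef,
      (∃ j, h.1.eigenvalues j = 1 / (N : ℝ)) ∧
      ∀ j, h.1.eigenvalues j = 0 ∨ 1 / (N : ℝ) ≤ h.1.eigenvalues j :=
  stmt6_general _
end
end

section
/- Let N ≥ 2, let ρ be a positive semidefinite N-qubit operator, and let α, β be real numbers with α ≥ max(−1, β/2 − 1) and β ≥ max(−1, α/2 − 1). Then σ = Tr(ρ)·𝟙 + α·ρ + β·ρ̃_A is biseparable across the 1:(N−1) bipartition at qubit 0. -/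
open scoped ComplexOrder

noncomputable section

/-!
For an operator `X` on a qubit, `σy * Xᵀ * σy = tr X • 1 - X`, so `ρ̃_A` is the reduction map
`𝟙 ⊗ Tr_A ρ - ρ`. By linearity we may take `ρ` to be the projector onto a vector `ψ` with Schmidt
decomposition `c₀ e₀ ⊗ f₀ + c₁ e₁ ⊗ f₁`. Write `s = c₀²` and `t = c₁²`. Then `σ` is diagonal in
the product basis, up to the coherence `(α - β) c₀ c₁` between `e₀ ⊗ f₀` and `e₁ ⊗ f₁`. Averaging
the projectors onto `(e₀ + w e₁) ⊗ (x f₀ + w⁻¹ y f₁)` over `w ∈ {1, -1, i, -i}` produces a separable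
operator with coherence `x y`, at a cost `x²` on `f₀` and `y²` on `f₁`. The diagonal of `σ` pays for
it when `x² ≤ s + t + μ s` and `y² ≤ s + t + μ t` with `μ = min α β`. Such `x` and `y` with
`x y = (α - β) c₀ c₁` exist because the hypotheses say exactly that `-1 ≤ μ` and `|α - β| ≤ 2 + μ`,
and `(s + t + μ s) (s + t + μ t) = (2 + μ)² s t + (1 + μ) (s - t)²`.
-/

section SingularValues

open Matrix

variable {𝕜 m n : Type*} [RCLike 𝕜] [Fintype m] [Fintype n] [DecidableEq n]

open scoped MatrixOrder in
lemma posSemidef_one_sub_conjTranspose_mul_self {F : Matrix m n 𝕜} (hF : F * Fᴴ * F = F) :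
    (1 - Fᴴ * F).PosSemidef := by
  have hidem : Fᴴ * F * (Fᴴ * F) = Fᴴ * F := by
    rw [Matrix.mul_assoc, ← Matrix.mul_assoc F, hF]
  have hproj : IsStarProjection (Fᴴ * F) := ⟨hidem, isHermitian_conjTranspose_mul_self F⟩
  exact hproj.one_sub_nonneg.posSemidef

variable [DecidableEq m]

lemma exists_diagonal_mul_eq_of_mul_conjTranspose_eq_diagonal {G : Matrix m n 𝕜} {c : m → ℝ}
    (hG : G * Gᴴ = diagonal fun k => (c k : 𝕜) ^ 2) :
    ∃ F : Matrix m n 𝕜, diagonal (fun k => (c k : 𝕜)) * F = G ∧ (1 - Fᴴ * F).PosSemidef := by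
  set C : Matrix m m 𝕜 := diagonal fun k => (c k : 𝕜)
  -- Since `0⁻¹ = 0`, the matrix `C * C'` is the projection onto the nonzero singular values.
  set C' : Matrix m m 𝕜 := diagonal fun k => (c k : 𝕜)⁻¹
  have hC'_star : C'ᴴ = C' := by simp [C', diagonal_conjTranspose]
  have hC : C * C' * C = C := by simp [C, C', diagonal_mul_diagonal]
  have hC' : C' * (C * C) * (C' * C') = C' := by
    simp only [C, C', diagonal_mul_diagonal]
    congr 1
    ext k
    by_cases hk : (c k : 𝕜) = 0
    · simp [hk]
    · field_simp
  have hGC : G * Gᴴ = C * C := by simp only [hG, C, diagonal_mul_diagonal, sq]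
  have hrange : C * (C' * G) = G := by
    have hzero : (C * C' - 1) * (G * Gᴴ) = 0 := by
      rw [hGC, ← Matrix.mul_assoc, Matrix.sub_mul, hC, Matrix.one_mul, sub_self, Matrix.zero_mul]
    rw [mul_self_mul_conjTranspose_eq_zero, Matrix.sub_mul, Matrix.one_mul, sub_eq_zero] at hzero
    rw [← Matrix.mul_assoc, hzero]
  have hpartialIsometry : C' * G * (C' * G)ᴴ * (C' * G) = C' * G := by
    calc C' * G * (C' * G)ᴴ * (C' * G) = C' * (G * Gᴴ) * (C' * C') * G := by
          simp only [conjTranspose_mul, hC'_star, Matrix.mul_assoc]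
      _ = C' * G := by rw [hGC, hC']
  exact ⟨C' * G, hrange, posSemidef_one_sub_conjTranspose_mul_self hpartialIsometry⟩

lemma exists_singular_value_decomposition (W : Matrix m n 𝕜) :
    ∃ U ∈ unitaryGroup m 𝕜, ∃ (c : m → ℝ) (F : Matrix m n 𝕜),
      W = U * diagonal (fun k => (c k : 𝕜)) * F ∧ (1 - Fᴴ * F).PosSemidef ∧
      W * Wᴴ = U * diagonal (fun k => (c k : 𝕜) ^ 2) * Uᴴ := by
  have hW : (W * Wᴴ).PosSemidef := posSemidef_self_mul_conjTranspose W
  obtain ⟨U, hU, c, hspec⟩ : ∃ U ∈ unitaryGroup m 𝕜, ∃ c : m → ℝ,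
      W * Wᴴ = U * diagonal (fun k => (c k : 𝕜) ^ 2) * Uᴴ := by
    refine ⟨_, hW.isHermitian.eigenvectorUnitary.2, fun k => √(hW.isHermitian.eigenvalues k), ?_⟩
    simp only [← RCLike.ofReal_pow, Real.sq_sqrt (hW.eigenvalues_nonneg _)]
    exact hW.isHermitian.spectral_theorem
  have hUstar : Uᴴ * U = 1 := mem_unitaryGroup_iff'.mp hU
  have hstarU : U * Uᴴ = 1 := mem_unitaryGroup_iff.mp hU
  have hgram : Uᴴ * W * (Uᴴ * W)ᴴ = diagonal fun k => (c k : 𝕜) ^ 2 := by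
    calc Uᴴ * W * (Uᴴ * W)ᴴ = Uᴴ * (W * Wᴴ) * U := by
          simp only [conjTranspose_mul, conjTranspose_conjTranspose, Matrix.mul_assoc]
      _ = (Uᴴ * U) * diagonal (fun k => (c k : 𝕜) ^ 2) * (Uᴴ * U) := by
          rw [hspec]; simp only [Matrix.mul_assoc]
      _ = _ := by rw [hUstar, Matrix.one_mul, Matrix.mul_one]
  obtain ⟨F, hF, hF_le⟩ := exists_diagonal_mul_eq_of_mul_conjTranspose_eq_diagonal hgram
  refine ⟨U, hU, c, F, ?_, hF_le, hspec⟩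
  rw [Matrix.mul_assoc, hF, ← Matrix.mul_assoc, hstarU, Matrix.one_mul]

end SingularValues

section SeparableCone

open Matrix Kronecker

variable {m n : Type*}

/-- The cone of separable (not necessarily normalised) operators on a bipartite system. Generating
it as an additive monoid suffices, since nonnegative scalars can be absorbed into `P`. -/
def separableCone (m n : Type*) : AddSubmonoid (Matrix (m × n) (m × n) ℂ) :=
  AddSubmonoid.closure {σ | ∃ (P : Matrix m m ℂ) (Q : Matrix n n ℂ),
    P.PosSemidef ∧ Q.PosSemidef ∧ σ = P ⊗ₖ Q}

lemma kronecker_mem_separableCone {P : Matrix m m ℂ} {Q : Matrix n n ℂ} (hP : P.PosSemidef)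
    (hQ : Q.PosSemidef) : P ⊗ₖ Q ∈ separableCone m n :=
  AddSubmonoid.subset_closure ⟨P, Q, hP, hQ, rfl⟩

lemma cross_terms_mem_separableCone [Finite m] [Finite n] (e₀ e₁ : m → ℂ) (f₀ f₁ : n → ℂ) :
    (vecMulVec e₀ (star e₀) + vecMulVec e₁ (star e₁)) ⊗ₖ
        (vecMulVec f₀ (star f₀) + vecMulVec f₁ (star f₁)) +
      (vecMulVec e₀ (star e₁) ⊗ₖ vecMulVec f₀ (star f₁) +
        vecMulVec e₁ (star e₀) ⊗ₖ vecMulVec f₁ (star f₀)) ∈ separableCone m n := by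
  have hproduct (w : ℂ) : ((1 / 4 : ℂ) • vecMulVec (e₀ + w • e₁) (star (e₀ + w • e₁))) ⊗ₖ
      vecMulVec (f₀ + star w • f₁) (star (f₀ + star w • f₁)) ∈ separableCone m n :=
    kronecker_mem_separableCone ((posSemidef_vecMulVec_self_star _).smul (by positivity))
      (posSemidef_vecMulVec_self_star _)
  -- All other cross terms carry `w ^ (±1)` or `w ^ (±2)`, which sum to zero over `w ^ 4 = 1`.
  convert add_mem (add_mem (hproduct 1) (hproduct (-1)))
    (add_mem (hproduct Complex.I) (hproduct (-Complex.I))) using 1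
  ext ⟨i, x⟩ ⟨j, y⟩
  simp only [vecMulVec, Pi.star_apply, RCLike.star_def, Matrix.add_apply, kroneckerMap_apply,
    of_apply, Pi.add_apply, Matrix.smul_apply, one_smul, star_add, star_one, neg_smul,
    Pi.neg_apply, star_neg, Pi.smul_apply, smul_eq_mul, star_mul', Complex.conj_I, neg_mul, neg_neg]
  ring_nf
  simp only [Complex.I_sq, Complex.I_pow_four]
  ring

lemma exists_mul_eq_of_sq_le_mul {p q c : ℝ} (hp : 0 ≤ p) (hq : 0 ≤ q) (h : c ^ 2 ≤ p * q) :
    ∃ x y : ℝ, x * y = c ∧ x ^ 2 ≤ p ∧ y ^ 2 ≤ q := by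
  refine ⟨√p, c / √p, ?_, (Real.sq_sqrt hp).le, ?_⟩
  · refine mul_div_cancel_of_imp' fun hp0 => ?_
    rw [Real.sqrt_eq_zero hp] at hp0
    rw [hp0, zero_mul] at h
    exact pow_eq_zero_iff two_ne_zero |>.mp (h.antisymm (sq_nonneg c))
  · rw [div_pow, Real.sq_sqrt hp]
    exact div_le_of_le_mul₀ hp hq (by linarith)

lemma sq_sub_mul_le_of_max_le {α β : ℝ} (hα : max (-1) (β / 2 - 1) ≤ α)
    (hβ : max (-1) (α / 2 - 1) ≤ β) {s t : ℝ} (hs : 0 ≤ s) (ht : 0 ≤ t) :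
    (α - β) ^ 2 * (s * t) ≤ (s + t + min α β * s) * (s + t + min α β * t) := by
  obtain ⟨hα₁, hα₂⟩ := max_le_iff.mp hα
  obtain ⟨hβ₁, hβ₂⟩ := max_le_iff.mp hβ
  have hmin : -1 ≤ min α β := le_min hα₁ hβ₁
  have hsub : |α - β| ≤ 2 + min α β := by
    rcases le_total α β with h | h
    · rw [min_eq_left h, abs_le]; constructor <;> linarith
    · rw [min_eq_right h, abs_le]; constructor <;> linarith
  calc (α - β) ^ 2 * (s * t) ≤ (2 + min α β) ^ 2 * (s * t) := by
        gcongr ?_ * _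
        exact sq_le_sq' (by linarith [neg_abs_le (α - β)]) ((le_abs_self _).trans hsub)
    _ ≤ (2 + min α β) ^ 2 * (s * t) + (1 + min α β) * (s - t) ^ 2 :=
        le_add_of_nonneg_right (mul_nonneg (by linarith) (sq_nonneg _))
    _ = (s + t + min α β * s) * (s + t + min α β * t) := by ring

lemma exists_mul_eq_sub_mul_of_max_le {α β : ℝ} (hα : max (-1) (β / 2 - 1) ≤ α)
    (hβ : max (-1) (α / 2 - 1) ≤ β) (c₀ c₁ : ℝ) :
    ∃ x y : ℝ, x * y = (α - β) * (c₀ * c₁) ∧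
      x ^ 2 ≤ c₀ ^ 2 + c₁ ^ 2 + min α β * c₀ ^ 2 ∧
      y ^ 2 ≤ c₀ ^ 2 + c₁ ^ 2 + min α β * c₁ ^ 2 := by
  have hmin : -1 ≤ min α β := le_min (le_of_max_le_left hα) (le_of_max_le_left hβ)
  refine exists_mul_eq_of_sq_le_mul (by nlinarith) (by nlinarith) ?_
  rw [mul_pow, mul_pow]
  exact sq_sub_mul_le_of_max_le hα hβ (sq_nonneg c₀) (sq_nonneg c₁)

variable [DecidableEq m] [DecidableEq n]

lemma schmidt_form_mem_separableCone [Finite m] [Finite n] {e₀ e₁ : m → ℂ} {f₀ f₁ : n → ℂ}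
    (he : vecMulVec e₀ (star e₀) + vecMulVec e₁ (star e₁) = 1)
    (hf : (1 - (vecMulVec f₀ (star f₀) + vecMulVec f₁ (star f₁))).PosSemidef)
    {α β : ℝ} (hα : max (-1) (β / 2 - 1) ≤ α) (hβ : max (-1) (α / 2 - 1) ≤ β) (c₀ c₁ : ℝ)
    {ψ : m × n → ℂ} (hψ : ∀ p, ψ p = c₀ * e₀ p.1 * f₀ p.2 + c₁ * e₁ p.1 * f₁ p.2) :
    ((c₀ : ℂ) ^ 2 + (c₁ : ℂ) ^ 2) • (1 : Matrix (m × n) (m × n) ℂ)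
      + ((α : ℂ) - β) • vecMulVec ψ (star ψ)
      + (β : ℂ) • ((1 : Matrix m m ℂ) ⊗ₖ
        ((c₀ : ℂ) ^ 2 • vecMulVec f₀ (star f₀) + (c₁ : ℂ) ^ 2 • vecMulVec f₁ (star f₁)))
      ∈ separableCone m n := by
  obtain ⟨x, y, hxy, hx, hy⟩ := exists_mul_eq_sub_mul_of_max_le hα hβ c₀ c₁
  set t := c₀ ^ 2 + c₁ ^ 2 with ht
  have hblock {p q : ℝ} (hp : min α β ≤ p) (hq : min α β ≤ q) :
      ((t : ℂ) • (1 - (vecMulVec f₀ (star f₀) + vecMulVec f₁ (star f₁))) +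
        ((t + p * c₀ ^ 2 - x ^ 2 : ℝ) : ℂ) • vecMulVec f₀ (star f₀) +
        ((t + q * c₁ ^ 2 - y ^ 2 : ℝ) : ℂ) • vecMulVec f₁ (star f₁)).PosSemidef := by
    refine ((hf.smul ?_).add ((posSemidef_vecMulVec_self_star f₀).smul ?_)).add
      ((posSemidef_vecMulVec_self_star f₁).smul ?_) <;> rw [Complex.zero_le_real]
    · positivity
    · nlinarith [sq_nonneg c₀]
    · nlinarith [sq_nonneg c₁]
  convert add_mem (cross_terms_mem_separableCone e₀ e₁ ((x : ℂ) • f₀) ((y : ℂ) • f₁))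
    (add_mem
      (kronecker_mem_separableCone (posSemidef_vecMulVec_self_star e₀)
        (hblock (min_le_left α β) (min_le_right α β)))
      (kronecker_mem_separableCone (posSemidef_vecMulVec_self_star e₁)
        (hblock (min_le_right α β) (min_le_left α β)))) using 1
  have hxy' : (x : ℂ) * y = (α - β) * (c₀ * c₁) := by exact_mod_cast hxy
  rw [← one_kronecker_one, ← he]
  ext ⟨i, j⟩ ⟨k, l⟩
  simp only [Complex.coe_smul, Matrix.add_apply, Matrix.smul_apply, kroneckerMap_apply,
    vecMulVec_apply, Pi.star_apply, RCLike.star_def, smul_eq_mul, hψ, star_add, star_mul',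
    Complex.conj_ofReal, Complex.real_smul, star_smul, star_trivial, vecMulVec_smul,
    smul_vecMulVec, ht, Complex.ofReal_add, Complex.ofReal_pow, Complex.ofReal_sub,
    Complex.ofReal_mul, Matrix.sub_apply]
  linear_combination (-(e₀ i * starRingEnd ℂ (e₁ k) * f₀ j * starRingEnd ℂ (f₁ l) +
    e₁ i * starRingEnd ℂ (e₀ k) * f₁ j * starRingEnd ℂ (f₀ l))) * hxy'

end SeparableCone

section Reduction

open Matrix Kronecker

/-- The partial trace over the first tensor factor, giving the reduced operator of the second. -/
def traceLeft {R m n : Type*} [AddCommMonoid R] [Fintype m] (ρ : Matrix (m × n) (m × n) R) :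
    Matrix n n R :=
  of fun x y => ∑ i, ρ (i, x) (i, y)

variable {R m n : Type*} [CommRing R] [Fintype m] [DecidableEq m]

variable (R m n) in
/-- The reduction map `ρ ↦ 𝟙 ⊗ Tr_A ρ - ρ` of entanglement theory, with `A` the first
tensor factor. For a qubit `A` it is `ρ ↦ ρ̃_A`. -/
def reductionMap : Matrix (m × n) (m × n) R →ₗ[R] Matrix (m × n) (m × n) R where
  toFun ρ := 1 ⊗ₖ traceLeft ρ - ρ
  map_add' ρ τ := by
    ext
    simp only [traceLeft, Matrix.add_apply, Finset.sum_add_distrib, Matrix.sub_apply,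
      kroneckerMap_apply, of_apply, mul_add]
    ring
  map_smul' c ρ := by
    ext
    simp only [traceLeft, Matrix.smul_apply, smul_eq_mul, ← Finset.mul_sum, Matrix.sub_apply,
      kroneckerMap_apply, of_apply, RingHom.id_apply]
    ring

lemma transpose_conjTranspose_mul_diagonal_mul [StarRing R] (F : Matrix m n R) (d : m → R) :
    (Fᴴ * diagonal d * F)ᵀ = ∑ k, d k • vecMulVec (F k) (star (F k)) := by
  ext x y
  rw [transpose_apply, mul_apply, Matrix.sum_apply]
  refine Finset.sum_congr rfl fun k _ => ?_
  rw [mul_diagonal, conjTranspose_apply, Matrix.smul_apply, vecMulVec_apply, Pi.star_apply,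
    smul_eq_mul]
  ring

variable [Fintype n] [DecidableEq n]

lemma pauliY_mul_partialTranspose_mul_pauliY (ρ : Matrix (Fin 2 × n) (Fin 2 × n) ℂ) :
    (pauliY ⊗ₖ 1) * of (fun p q => ρ (q.1, p.2) (p.1, q.2)) * (pauliY ⊗ₖ 1) =
      reductionMap ℂ (Fin 2) n ρ := by
  ext ⟨i, x⟩ ⟨j, y⟩
  simp only [mul_apply, Fintype.sum_prod_type, kronecker_apply, reductionMap]
  fin_cases i <;> fin_cases j <;>
    simp [pauliY, one_apply, traceLeft, mul_right_comm Complex.I _ Complex.I]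

variable {𝕜 : Type*} [RCLike 𝕜]

lemma exists_schmidt_decomposition (ψ : m × n → 𝕜) :
    ∃ (c : m → ℝ) (e : m → m → 𝕜) (f : m → n → 𝕜),
      ∑ k, vecMulVec (e k) (star (e k)) = 1 ∧
      (1 - ∑ k, vecMulVec (f k) (star (f k))).PosSemidef ∧
      (∀ p, ψ p = ∑ k, c k * e k p.1 * f k p.2) ∧
      (vecMulVec ψ (star ψ)).trace = ∑ k, (c k : 𝕜) ^ 2 ∧
      traceLeft (vecMulVec ψ (star ψ)) = ∑ k, (c k : 𝕜) ^ 2 • vecMulVec (f k) (star (f k)) := by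
  set W : Matrix m n 𝕜 := of fun i x => ψ (i, x)
  obtain ⟨U, hU, c, F, hW, hF, hgram⟩ := exists_singular_value_decomposition W
  have hUstar : Uᴴ * U = 1 := mem_unitaryGroup_iff'.mp hU
  have hstarU : U * Uᴴ = 1 := mem_unitaryGroup_iff.mp hU
  set D : Matrix m m 𝕜 := diagonal fun k => (c k : 𝕜)
  have hgram' : Wᴴ * W = Fᴴ * diagonal (fun k => (c k : 𝕜) ^ 2) * F := by
    calc Wᴴ * W = Fᴴ * (Dᴴ * (Uᴴ * U) * D) * F := by
          simp only [hW, conjTranspose_mul, Matrix.mul_assoc]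
      _ = Fᴴ * diagonal (fun k => (c k : 𝕜) ^ 2) * F := by
          rw [hUstar, Matrix.mul_one]
          simp [D, diagonal_conjTranspose, diagonal_mul_diagonal, sq]
  refine ⟨c, fun k i => U i k, F, ?_, ?_, fun p => ?_, ?_, ?_⟩
  · rw [← hstarU]
    ext i j
    simp [Matrix.sum_apply, mul_apply, vecMulVec_apply]
  · have hsum := transpose_conjTranspose_mul_diagonal_mul F 1
    simp only [Pi.one_def, diagonal_one, Matrix.mul_one, one_smul] at hsum
    rw [← hsum, ← transpose_one, ← transpose_sub]
    exact hF.transpose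
  · have hp : W p.1 p.2 = (U * D * F) p.1 p.2 := by rw [← hW]
    simpa only [W, D, of_apply, mul_apply (M := U * D), mul_diagonal, mul_comm (U _ _)] using hp
  · calc (vecMulVec ψ (star ψ)).trace = (W * Wᴴ).trace := by
          simp [W, trace, mul_apply, vecMulVec_apply, Fintype.sum_prod_type]
      _ = ∑ k, (c k : 𝕜) ^ 2 := by
          rw [hgram, trace_mul_comm, ← Matrix.mul_assoc, hUstar, Matrix.one_mul, trace_diagonal]
  · calc traceLeft (vecMulVec ψ (star ψ)) = (Wᴴ * W)ᵀ := by
          ext x y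
          simp [W, traceLeft, mul_apply, vecMulVec_apply, mul_comm]
      _ = ∑ k, (c k : 𝕜) ^ 2 • vecMulVec (F k) (star (F k)) := by
          rw [hgram', transpose_conjTranspose_mul_diagonal_mul]

lemma add_smul_reductionMap_vecMulVec_mem_separableCone {α β : ℝ} (hα : max (-1) (β / 2 - 1) ≤ α)
    (hβ : max (-1) (α / 2 - 1) ≤ β) (ψ : Fin 2 × n → ℂ) :
    (vecMulVec ψ (star ψ)).trace • 1 + (α : ℂ) • vecMulVec ψ (star ψ) +
      (β : ℂ) • reductionMap ℂ (Fin 2) n (vecMulVec ψ (star ψ)) ∈ separableCone (Fin 2) n := by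
  obtain ⟨c, e, f, he, hf, hψ, htrace, htraceLeft⟩ := exists_schmidt_decomposition ψ
  simp only [Fin.sum_univ_two] at he hf hψ htrace htraceLeft
  convert schmidt_form_mem_separableCone he hf hα hβ (c 0) (c 1) hψ using 1
  simp only [htrace, reductionMap, LinearMap.coe_mk, AddHom.coe_mk, htraceLeft,
    RCLike.ofReal_eq_complex_ofReal]
  module

lemma add_smul_reductionMap_mem_separableCone {α β : ℝ} (hα : max (-1) (β / 2 - 1) ≤ α)
    (hβ : max (-1) (α / 2 - 1) ≤ β) {ρ : Matrix (Fin 2 × n) (Fin 2 × n) ℂ}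
    (hρ : ρ.PosSemidef) :
    ρ.trace • 1 + (α : ℂ) • ρ + (β : ℂ) • reductionMap ℂ (Fin 2) n ρ ∈
      separableCone (Fin 2) n := by
  obtain ⟨r, ψ, rfl⟩ := posSemidef_iff_eq_sum_vecMulVec.mp hρ
  simp only [trace_sum, map_sum, Finset.sum_smul, Finset.smul_sum, ← Finset.sum_add_distrib]
  exact sum_mem fun k _ => add_smul_reductionMap_vecMulVec_mem_separableCone hα hβ (ψ k)

end Reduction

section Qubits

open Matrix Kronecker

variable {N : ℕ}

lemma SepAcross.zero (X : Finset (Fin N)) : SepAcross X 0 :=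
  ⟨0, fun _ => 0, fun _ => 0, fun k => k.elim0, fun k => k.elim0, by simp⟩

lemma SepAcross.add {X : Finset (Fin N)} {σ τ : Matrix (Fin N → Fin 2) (Fin N → Fin 2) ℂ}
    (hσ : SepAcross X σ) (hτ : SepAcross X τ) : SepAcross X (σ + τ) := by
  obtain ⟨K, A, B, hA, hB, h⟩ := hσ
  obtain ⟨L, A', B', hA', hB', h'⟩ := hτ
  refine ⟨K + L, Fin.append A A', Fin.append B B', ?_, ?_, fun x y => ?_⟩
  · exact Fin.addCases (by simpa using hA) (by simpa using hA')
  · exact Fin.addCases (by simpa using hB) (by simpa using hB')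
  · simp [Fin.sum_univ_add, h, h']

lemma SepAcross.of_kronecker (z : Fin N) {P : Matrix (Fin 2) (Fin 2) ℂ} (hP : P.PosSemidef)
    {Q : Matrix ({i // i ≠ z} → Fin 2) ({i // i ≠ z} → Fin 2) ℂ} (hQ : Q.PosSemidef) :
    SepAcross {z} (reindex (Equiv.funSplitAt z (Fin 2)).symm (Equiv.funSplitAt z (Fin 2)).symm
      (P ⊗ₖ Q)) :=
  ⟨1, fun _ => P.submatrix (fun f => f ⟨z, by simp⟩) (fun f => f ⟨z, by simp⟩),
    fun _ => Q.submatrix (fun f i => f ⟨i, by simpa using i.2⟩)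
      (fun f i => f ⟨i, by simpa using i.2⟩),
    fun _ => hP.submatrix _, fun _ => hQ.submatrix _, by simp⟩

lemma sepAcross_singleton_of_mem_separableCone {z : Fin N}
    {σ : Matrix (Fin N → Fin 2) (Fin N → Fin 2) ℂ}
    (hσ : reindexAlgEquiv ℂ ℂ (Equiv.funSplitAt z (Fin 2)) σ ∈
      separableCone (Fin 2) ({i // i ≠ z} → Fin 2)) :
    SepAcross {z} σ := by
  suffices h : ∀ τ ∈ separableCone (Fin 2) ({i // i ≠ z} → Fin 2),
      SepAcross {z} ((reindexAlgEquiv ℂ ℂ (Equiv.funSplitAt z (Fin 2))).symm τ) by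
    simpa using h _ hσ
  intro τ hτ
  induction hτ using AddSubmonoid.closure_induction with
  | mem τ hτ =>
    obtain ⟨P, Q, hP, hQ, rfl⟩ := hτ
    exact .of_kronecker z hP hQ
  | zero => simpa only [map_zero] using SepAcross.zero {z}
  | add τ₁ τ₂ _ _ h₁ h₂ => simpa only [map_add] using h₁.add h₂

lemma reindexAlgEquiv_pauliYat (z : Fin N) :
    reindexAlgEquiv ℂ ℂ (Equiv.funSplitAt z (Fin 2)) (pauliYat {z}) = pauliY ⊗ₖ 1 := by
  ext ⟨i, x⟩ ⟨j, y⟩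
  have hrest : (∏ k : {k // k ≠ z}, if x k = y k then (1 : ℂ) else 0) = (1 : Matrix _ _ ℂ) x y := by
    simp [Fintype.prod_boole, one_apply, funext_iff]
  have hne (k : {k // k ≠ z}) : (k : Fin N) ≠ z := k.2
  simp [pauliYat, Fintype.prod_eq_mul_prod_subtype_ne _ z, hne, ← hrest]

lemma reindexAlgEquiv_pt (z : Fin N) (ρ : Matrix (Fin N → Fin 2) (Fin N → Fin 2) ℂ) :
    reindexAlgEquiv ℂ ℂ (Equiv.funSplitAt z (Fin 2)) (pt {z} ρ) =
      of fun p q => reindexAlgEquiv ℂ ℂ (Equiv.funSplitAt z (Fin 2)) ρ (q.1, p.2) (p.1, q.2) := by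
  ext ⟨i, x⟩ ⟨j, y⟩
  simp only [pt, coe_reindexAlgEquiv, reindex_apply, submatrix_apply, of_apply]
  congr 1 <;> funext k <;> by_cases hk : k = z <;> simp [hk, Equiv.funSplitAt]

lemma reindexAlgEquiv_tildeAt (z : Fin N) (ρ : Matrix (Fin N → Fin 2) (Fin N → Fin 2) ℂ) :
    reindexAlgEquiv ℂ ℂ (Equiv.funSplitAt z (Fin 2)) (tildeAt {z} ρ) =
      reductionMap ℂ (Fin 2) _ (reindexAlgEquiv ℂ ℂ (Equiv.funSplitAt z (Fin 2)) ρ) := by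
  rw [tildeAt, map_mul, map_mul, reindexAlgEquiv_pauliYat, reindexAlgEquiv_pt,
    pauliY_mul_partialTranspose_mul_pauliY]

end Qubits

theorem stmt11_general {N : ℕ} (z : Fin N) {ρ : Matrix (Fin N → Fin 2) (Fin N → Fin 2) ℂ}
    (hρ : ρ.PosSemidef) {α β : ℝ} (hα : max (-1) (β / 2 - 1) ≤ α)
    (hβ : max (-1) (α / 2 - 1) ≤ β) :
    SepAcross {z}
      (ρ.trace • (1 : Matrix (Fin N → Fin 2) (Fin N → Fin 2) ℂ) + (α : ℂ) • ρ +
        (β : ℂ) • tildeAt {z} ρ) := by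
  let e := Equiv.funSplitAt z (Fin 2)
  have htrace : (Matrix.reindexAlgEquiv ℂ ℂ e ρ).trace = ρ.trace :=
    e.symm.sum_comp fun x => ρ x x
  have hmem := add_smul_reductionMap_mem_separableCone hα hβ (hρ.submatrix e.symm)
  apply sepAcross_singleton_of_mem_separableCone
  rw [map_add, map_add, map_smul, map_smul, map_smul, map_one, reindexAlgEquiv_tildeAt, ← htrace]
  exact hmem

/-- Breuer-Hall-inspired map: `Tr(ρ)𝟙 + αρ + βρ̃_A` is biseparable across the
`1:(N-1)` bipartition at qubit `0`. -/
theorem stmt11 (N : ℕ) (hN : 2 ≤ N)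
    (ρ : Matrix (Fin N → Fin 2) (Fin N → Fin 2) ℂ) (hρ : ρ.PosSemidef)
    (α β : ℝ) (hα : max (-1) (β / 2 - 1) ≤ α) (hβ : max (-1) (α / 2 - 1) ≤ β) :
    SepAcross {⟨0, by omega⟩}
      (ρ.trace • (1 : Matrix (Fin N → Fin 2) (Fin N → Fin 2) ℂ) + (α : ℂ) • ρ +
        (β : ℂ) • tildeAt {⟨0, by omega⟩} ρ) :=
  stmt11_general _ hρ hα hβ
end
end
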